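/- Let k be a field of characteristic ≠ 2, (W, B_W) a finite-dimensional vector space over k with a nondegenerate symmetric bilinear form, and let V = kp ⊕ kq ⊕ W carry the symmetric bilinear form B extending B_W with B(p,p) = B(q,q) = 0, B(p,q) = 1, and p, q orthogonal to W. Then the map (t,R) ↦ h(t,R) is a group isomorphism from the Poincaré group P_W = W ⋊ SO(W), with multiplication (t,R)(t',R') = (t + Rt', RR'), onto the stabilizer H_p = {g ∈ SO(V) : g p = p} of the null vector p in SO(V). -/

import Mathlib

namespace ConformalModel

variable {k W : Type*} [Field k] [AddCommGroup W] [Module k W]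

/-- The bilinear form on `V = kp ⊕ kq ⊕ W`, realized as `k × k × W` with `p = (1,0,0)` and
`q = (0,1,0)`: `B((a,b,w),(a',b',w')) = a b' + b a' + B_W(w,w')`. -/
def Bext (BW : LinearMap.BilinForm k W) : LinearMap.BilinForm k (k × k × W) :=
  LinearMap.mk₂ k (fun x y => x.1 * y.2.1 + x.2.1 * y.1 + BW x.2.2 y.2.2)
    (by intro m₁ m₂ n; simp; ring)
    (by intro c m n; simp; ring)
    (by intro m n₁ n₂; simp; ring)
    (by intro c m n; simp; ring)

/-- The distinguished null vector `p`. -/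
def pVec : k × k × W := (1, 0, 0)

/-- The linear map `h(t,R)` of `V = kp ⊕ kq ⊕ W`, determined by `h(t,R)p = p`,
`h(t,R)q = −(B(t,t)/2)p + q + t`, `h(t,R)w = −B(t,Rw)p + Rw`. -/
def hMap (BW : LinearMap.BilinForm k W) (t : W) (R : W →ₗ[k] W) :
    (k × k × W) →ₗ[k] (k × k × W) where
  toFun x := (x.1 - x.2.1 * (BW t t / 2) - BW t (R x.2.2), x.2.1, x.2.1 • t + R x.2.2)
  map_add' x y := by
    refine Prod.ext ?_ (Prod.ext ?_ ?_)
    · simp; ring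
    · simp
    · simp [add_smul]; abel
  map_smul' c x := by
    refine Prod.ext ?_ (Prod.ext ?_ ?_)
    · simp; ring
    · simp
    · simp [mul_smul, smul_add]

/-- The dilation `c̃` with `c̃ p = c p`, `c̃ q = c⁻¹ q`, `c̃ w = w`. -/
def cTilde (c : k) : (k × k × W) →ₗ[k] (k × k × W) where
  toFun x := (c * x.1, c⁻¹ * x.2.1, x.2.2)
  map_add' x y := by
    refine Prod.ext ?_ (Prod.ext ?_ ?_) <;> simp <;> ring
  map_smul' r x := by
    refine Prod.ext ?_ (Prod.ext ?_ ?_) <;> simp <;> ring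

/-- The section `J₀ : W → V`, `J₀(w) = −(B(w,w)/2)p + q + w`. -/
def J0 (BW : LinearMap.BilinForm k W) (w : W) : k × k × W := (-(BW w w / 2), 1, w)

/-- Membership in the special orthogonal group of a bilinear form, for a linear
endomorphism: it is bijective, preserves the form, and has determinant 1. -/
def IsSO {V : Type*} [AddCommGroup V] [Module k V] (B : LinearMap.BilinForm k V)
    (g : V →ₗ[k] V) : Prop :=
  Function.Bijective g ∧ (∀ x y, B (g x) (g y) = B x y) ∧ LinearMap.det g = 1

/-!
In the decomposition `V = kp ⊕ (kq ⊕ W)` the map `h(t,R)` is block triangular with diagonal blocks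
`1, 1, R`, so `det h(t,R) = det R`; and `B(h(t,R)x, h(t,R)y)` differs from `B(x, y)` only in that
`R` is applied to the `W`-components. Hence `h(t,R) ∈ SO(V)` if and only if `R ∈ SO(W)`.
Conversely, let `g` be an isometry fixing `p`. Pairing with `p` shows that `g` preserves the
`q`-coordinate; write `t` and `Rw` for the `W`-components of `gq` and `gw`. Then
`B(gq, gq) = 0` and `B(gq, gw) = 0` force the `p`-coordinates of `gq` and `gw` to be
`-B(t,t)/2` and `-B(t,Rw)`, that is, `g = h(t,R)`.
-/

section Determinant

variable {A M N : Type*} [CommRing A] [AddCommGroup M] [Module A M] [AddCommGroup N] [Module A N]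

theorem toMatrix_prod_coprod {m n : Type*} [Fintype m] [Fintype n] [DecidableEq m] [DecidableEq n]
    (b : Module.Basis m A M) (b' : Module.Basis n A N)
    (f : M →ₗ[A] M) (c : N →ₗ[A] M) (d : M →ₗ[A] N) (g : N →ₗ[A] N) :
    LinearMap.toMatrix (b.prod b') (b.prod b') ((f.coprod c).prod (d.coprod g)) =
      Matrix.fromBlocks (LinearMap.toMatrix b b f) (LinearMap.toMatrix b' b c)
        (LinearMap.toMatrix b b' d) (LinearMap.toMatrix b' b' g) := by
  ext (i | i) (j | j) <;> simp [LinearMap.toMatrix_apply]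

variable [Module.Free A M] [Module.Finite A M] [Module.Free A N] [Module.Finite A N]

theorem det_upper_block_triangular (f : M →ₗ[A] M) (c : N →ₗ[A] M) (g : N →ₗ[A] N) :
    LinearMap.det ((f.coprod c).prod ((0 : M →ₗ[A] N).coprod g)) =
      LinearMap.det f * LinearMap.det g := by
  classical
  let b := Module.Free.chooseBasis A M
  let b' := Module.Free.chooseBasis A N
  rw [← LinearMap.det_toMatrix (b.prod b'), toMatrix_prod_coprod, map_zero,
    Matrix.det_fromBlocks_zero₂₁, LinearMap.det_toMatrix, LinearMap.det_toMatrix]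

theorem det_lower_block_triangular (f : M →ₗ[A] M) (d : M →ₗ[A] N) (g : N →ₗ[A] N) :
    LinearMap.det ((f.coprod (0 : N →ₗ[A] M)).prod (d.coprod g)) =
      LinearMap.det f * LinearMap.det g := by
  classical
  let b := Module.Free.chooseBasis A M
  let b' := Module.Free.chooseBasis A N
  rw [← LinearMap.det_toMatrix (b.prod b'), toMatrix_prod_coprod, map_zero,
    Matrix.det_fromBlocks_zero₁₂, LinearMap.det_toMatrix, LinearMap.det_toMatrix]

theorem bijective_of_isUnit_det {f : M →ₗ[A] M} (hf : IsUnit (LinearMap.det f)) :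
    Function.Bijective f :=
  (Module.End.isUnit_iff f).1 ((LinearMap.isUnit_iff_isUnit_det f).2 hf)

end Determinant

theorem isSO_iff {V : Type*} [AddCommGroup V] [Module k V] [FiniteDimensional k V]
    {B : LinearMap.BilinForm k V} {g : V →ₗ[k] V} :
    IsSO B g ↔ (∀ x y, B (g x) (g y) = B x y) ∧ LinearMap.det g = 1 :=
  and_iff_right_of_imp fun h => bijective_of_isUnit_det (h.2 ▸ isUnit_one)

variable {BW : LinearMap.BilinForm k W}

theorem Bext_apply (x y : k × k × W) :
    Bext BW x y = x.1 * y.2.1 + x.2.1 * y.1 + BW x.2.2 y.2.2 :=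
  rfl

theorem Bext_pVec_left (x : k × k × W) : Bext BW pVec x = x.2.1 := by
  simp [Bext_apply, pVec]

theorem hMap_apply (t : W) (R : W →ₗ[k] W) (x : k × k × W) :
    hMap BW t R x =
      (x.1 - x.2.1 * (BW t t / 2) - BW t (R x.2.2), x.2.1, x.2.1 • t + R x.2.2) :=
  rfl

theorem hMap_pVec (t : W) (R : W →ₗ[k] W) : hMap BW t R pVec = pVec := by
  simp [hMap_apply, pVec]

theorem hMap_injective2 : Function.Injective2 (hMap BW) := by
  intro t t' R R' h
  have h_snd (b : k) (w : W) : b • t + R w = b • t' + R' w :=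
    congrArg (fun x => x.2.2) (LinearMap.congr_fun h (0, b, w))
  exact ⟨by simpa using h_snd 1 0, LinearMap.ext fun w => by simpa using h_snd 0 w⟩

theorem hMap_comp (hchar : (2 : k) ≠ 0) (hsymm : ∀ x y, BW x y = BW y x) (t t' : W)
    {R : W →ₗ[k] W} (hR : ∀ x y, BW (R x) (R y) = BW x y) (R' : W →ₗ[k] W) :
    hMap BW t R ∘ₗ hMap BW t' R' = hMap BW (t + R t') (R ∘ₗ R') := by
  refine LinearMap.ext fun x => ?_
  simp only [LinearMap.comp_apply, hMap_apply, map_add, map_smul, LinearMap.add_apply, smul_eq_mul,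
    smul_add, hR, hsymm (R t') t, add_assoc, Prod.mk.injEq, and_true]
  field_simp
  ring

theorem Bext_hMap_hMap (hchar : (2 : k) ≠ 0) (hsymm : ∀ x y, BW x y = BW y x) (t : W)
    (R : W →ₗ[k] W) (x y : k × k × W) :
    Bext BW (hMap BW t R x) (hMap BW t R y) =
      x.1 * y.2.1 + x.2.1 * y.1 + BW (R x.2.2) (R y.2.2) := by
  simp only [Bext_apply, hMap_apply, map_add, map_smul, LinearMap.add_apply, LinearMap.smul_apply,
    smul_eq_mul, hsymm (R x.2.2) t]
  field_simp
  ring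

theorem hMap_isometry_iff (hchar : (2 : k) ≠ 0) (hsymm : ∀ x y, BW x y = BW y x) {t : W}
    {R : W →ₗ[k] W} :
    (∀ x y, Bext BW (hMap BW t R x) (hMap BW t R y) = Bext BW x y) ↔
      ∀ x y, BW (R x) (R y) = BW x y := by
  simp [Bext_hMap_hMap hchar hsymm, Bext_apply]

theorem hMap_eq_block_triangular (t : W) (R : W →ₗ[k] W) :
    hMap BW t R =
      (LinearMap.id.coprod ((-(BW t t / 2) • LinearMap.id).coprod (-(BW t ∘ₗ R)))).prod
        ((0 : k →ₗ[k] k × W).coprod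
          ((LinearMap.id.coprod 0).prod ((LinearMap.toSpanSingleton k W t).coprod R))) := by
  ext <;> simp [hMap_apply]

theorem det_hMap [FiniteDimensional k W] (t : W) (R : W →ₗ[k] W) :
    LinearMap.det (hMap BW t R) = LinearMap.det R := by
  rw [hMap_eq_block_triangular, det_upper_block_triangular, det_lower_block_triangular,
    LinearMap.det_id, one_mul, one_mul]

theorem isSO_hMap_iff [FiniteDimensional k W] (hchar : (2 : k) ≠ 0)
    (hsymm : ∀ x y, BW x y = BW y x) {t : W} {R : W →ₗ[k] W} :
    IsSO (Bext BW) (hMap BW t R) ↔ IsSO BW R := by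
  rw [isSO_iff, isSO_iff, hMap_isometry_iff hchar hsymm, det_hMap]

theorem apply_snd_fst_of_isometry {g : (k × k × W) →ₗ[k] k × k × W}
    (hg : ∀ x y, Bext BW (g x) (g y) = Bext BW x y) (hp : g pVec = pVec) (x : k × k × W) :
    (g x).2.1 = x.2.1 := by
  simpa only [hp, Bext_pVec_left] using hg pVec x

theorem exists_eq_hMap_of_isometry (hchar : (2 : k) ≠ 0) {g : (k × k × W) →ₗ[k] k × k × W}
    (hg : ∀ x y, Bext BW (g x) (g y) = Bext BW x y) (hp : g pVec = pVec) :
    ∃ (t : W) (R : W →ₗ[k] W), g = hMap BW t R := by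
  let projW : (k × k × W) →ₗ[k] W := LinearMap.snd k k W ∘ₗ LinearMap.snd k k (k × W)
  let inclW : W →ₗ[k] k × k × W := LinearMap.inr k k (k × W) ∘ₗ LinearMap.inr k k W
  let t : W := projW (g (0, 1, 0))
  let R : W →ₗ[k] W := projW ∘ₗ g ∘ₗ inclW
  have g_q_snd : (g (0, 1, 0)).2 = (1, t) := Prod.ext (apply_snd_fst_of_isometry hg hp _) rfl
  have g_w_snd (w : W) : (g (0, 0, w)).2 = (0, R w) :=
    Prod.ext (apply_snd_fst_of_isometry hg hp _) rfl
  have g_q_fst : (g (0, 1, 0)).1 = -(BW t t / 2) := by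
    have h : (g (0, 1, 0)).1 + (g (0, 1, 0)).1 + BW t t = 0 := by
      simpa [Bext_apply, g_q_snd] using hg (0, 1, 0) (0, 1, 0)
    field_simp
    linear_combination h
  have g_w_fst (w : W) : (g (0, 0, w)).1 = -BW t (R w) := by
    have h : (g (0, 0, w)).1 + BW t (R w) = 0 := by
      simpa [Bext_apply, g_q_snd, g_w_snd] using hg (0, 1, 0) (0, 0, w)
    exact eq_neg_of_add_eq_zero_left h
  have g_q : g (0, 1, 0) = hMap BW t R (0, 1, 0) := by
    simp [Prod.ext_iff, hMap_apply, g_q_fst, g_q_snd]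
  have g_w (w : W) : g (0, 0, w) = hMap BW t R (0, 0, w) := by
    simp [Prod.ext_iff, hMap_apply, g_w_fst, g_w_snd]
  refine ⟨t, R, LinearMap.ext fun x => ?_⟩
  have x_eq : x = x.1 • pVec + x.2.1 • (0, 1, 0) + (0, 0, x.2.2) := by simp [pVec]
  rw [x_eq]
  simp only [map_add, map_smul, hp, hMap_pVec, g_q, g_w]

theorem stmt_9_general [FiniteDimensional k W] (hchar : (2 : k) ≠ 0)
    (hsymm : ∀ x y, BW x y = BW y x) :
    (∀ (t : W) (R : W →ₗ[k] W), IsSO BW R →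
      IsSO (Bext BW) (hMap BW t R) ∧ hMap BW t R pVec = pVec) ∧
    (∀ (t t' : W) (R R' : W →ₗ[k] W), IsSO BW R → IsSO BW R' →
      (hMap BW t R) ∘ₗ (hMap BW t' R') = hMap BW (t + R t') (R ∘ₗ R')) ∧
    (∀ (t t' : W) (R R' : W →ₗ[k] W), hMap BW t R = hMap BW t' R' → t = t' ∧ R = R') ∧
    (∀ g : (k × k × W) →ₗ[k] (k × k × W), IsSO (Bext BW) g → g pVec = pVec →
      ∃ (t : W) (R : W →ₗ[k] W), IsSO BW R ∧ g = hMap BW t R) := by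
  refine ⟨fun t R hR => ⟨(isSO_hMap_iff hchar hsymm).2 hR, hMap_pVec t R⟩,
    fun t t' R R' hR _ => hMap_comp hchar hsymm t t' hR.2.1 R',
    fun t t' R R' h => hMap_injective2 h, fun g hg hp => ?_⟩
  obtain ⟨t, R, rfl⟩ := exists_eq_hMap_of_isometry hchar hg.2.1 hp
  exact ⟨t, R, (isSO_hMap_iff hchar hsymm).1 hg, rfl⟩

/-- `(t,R) ↦ h(t,R)` is a group isomorphism from the Poincaré group `P_W = W ⋊ SO(W)`
(with multiplication `(t,R)(t',R') = (t + Rt', RR')`) onto the stabilizer `H_p` of the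
null vector `p` in `SO(V)`, where `V = kp ⊕ kq ⊕ W`: it lands in `H_p`, is a homomorphism,
is injective, and is surjective onto `H_p`. -/
theorem stmt_9 {k W : Type*} [Field k] [AddCommGroup W] [Module k W]
    [FiniteDimensional k W] (hchar : (2 : k) ≠ 0)
    (BW : LinearMap.BilinForm k W)
    (hsymm : ∀ x y, BW x y = BW y x)
    (hnd : ∀ x, (∀ y, BW x y = 0) → x = 0) :
    -- the map lands in the stabilizer `H_p` of `p` in `SO(V)`
    (∀ (t : W) (R : W →ₗ[k] W), IsSO BW R →
      IsSO (Bext BW) (hMap BW t R) ∧ hMap BW t R pVec = pVec) ∧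
    -- group homomorphism: `h(t,R) ∘ h(t',R') = h(t + Rt', RR')`
    (∀ (t t' : W) (R R' : W →ₗ[k] W), IsSO BW R → IsSO BW R' →
      (hMap BW t R) ∘ₗ (hMap BW t' R') = hMap BW (t + R t') (R ∘ₗ R')) ∧
    -- injectivity
    (∀ (t t' : W) (R R' : W →ₗ[k] W), hMap BW t R = hMap BW t' R' → t = t' ∧ R = R') ∧
    -- surjectivity onto the stabilizer of `p` in `SO(V)`
    (∀ g : (k × k × W) →ₗ[k] (k × k × W), IsSO (Bext BW) g → g pVec = pVec →
      ∃ (t : W) (R : W →ₗ[k] W), IsSO BW R ∧ g = hMap BW t R) :=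
  stmt_9_general hchar hsymm

end ConformalModel
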